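/- arXiv:1906.06872 — 4 statements merged into one kernel-verified Lean document; each statement's English description precedes it below -/
import Mathlib

section
/- (Weak duality for second order discrete inclusions, Theorem 3.2.) Let N ≥ 2, F(·,t) : ℝⁿ × ℝⁿ ⇉ ℝⁿ for t = 0,…,N−2, φ : ℝⁿ × ℝⁿ → ℝ ∪ {+∞}, and Q₀, Q₁ ⊆ ℝⁿ. For every feasible trajectory {x_t}_{t=0}^N of (P_D) and every choice of vectors x*_t ∈ ℝⁿ (t = 0,…,N) and μ*_t ∈ ℝⁿ (t = 0,…,N−1), the inequality φ(x_{N−1}, x_N) ≥ −φ*(μ*_{N−1} − x*_{N−1}, −x*_N) + Σ_{t=0}^{N−2} M_{F(·,t)}(x*_t − μ*_t, μ*_{t+1}, x*_{t+2}) − W_{Q₀}(x*₀ − μ*₀) − W_{Q₁}(x*₁) holds in ℝ ∪ {±∞}. -/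
open scoped RealInnerProductSpace Pointwise
open MeasureTheory Matrix

noncomputable section

abbrev En (n : ℕ) := EuclideanSpace ℝ (Fin n)

/-- Fenchel conjugate of an extended-real-valued function on a product of two
inner product spaces (inner product of pairs is the sum of componentwise inner products). -/
def fconj2 {V W : Type*} [NormedAddCommGroup V] [InnerProductSpace ℝ V]
    [NormedAddCommGroup W] [InnerProductSpace ℝ W]
    (g : V × W → EReal) (u : V) (w : W) : EReal :=
  ⨆ p : V × W, ((⟪p.1, u⟫ + ⟪p.2, w⟫ : ℝ) : EReal) - g p

/-- Fenchel conjugate on a triple product. -/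
def fconj3 {V : Type*} [NormedAddCommGroup V] [InnerProductSpace ℝ V]
    (g : V × V × V → EReal) (u₁ u₂ u₃ : V) : EReal :=
  ⨆ p : V × V × V,
    ((⟪p.1, u₁⟫ + ⟪p.2.1, u₂⟫ + ⟪p.2.2, u₃⟫ : ℝ) : EReal) - g p

/-- Fenchel conjugate on a finite power of an inner product space. -/
def fconjPi {N : ℕ} {V : Type*} [NormedAddCommGroup V] [InnerProductSpace ℝ V]
    (g : (Fin N → V) → EReal) (u : Fin N → V) : EReal :=
  ⨆ w : Fin N → V, ((∑ i, ⟪w i, u i⟫ : ℝ) : EReal) - g w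

/-- Support function `W_A`. -/
def suppFn {V : Type*} [NormedAddCommGroup V] [InnerProductSpace ℝ V]
    (A : Set V) (u : V) : EReal :=
  ⨆ x ∈ A, ((⟪x, u⟫ : ℝ) : EReal)

/-- The function `M_F(x*,y*,z*) = inf {⟨x,x*⟩+⟨y,y*⟩-⟨z,z*⟩ : (x,y,z) ∈ gph F}`. -/
def MF {V : Type*} [NormedAddCommGroup V] [InnerProductSpace ℝ V]
    (F : V → V → Set V) (x' y' z' : V) : EReal :=
  ⨅ (x : V) (y : V) (z : V) (_ : z ∈ F x y),
    ((⟪x, x'⟫ + ⟪y, y'⟫ - ⟪z, z'⟫ : ℝ) : EReal)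

/-- Hamiltonian `H_F(x,y,z*) = sup {⟨z,z*⟩ : z ∈ F(x,y)}` (`⊥` if `F(x,y) = ∅`). -/
def HF {V : Type*} [NormedAddCommGroup V] [InnerProductSpace ℝ V]
    (F : V → V → Set V) (x y z' : V) : EReal :=
  ⨆ z ∈ F x y, ((⟪z, z'⟫ : ℝ) : EReal)

/-- Locally adjoint mapping `F*(z*;(x,y,·))`. -/
def LAM {V : Type*} [NormedAddCommGroup V] [InnerProductSpace ℝ V]
    (F : V → V → Set V) (z' x y : V) : Set (V × V) :=
  {p | ∀ x₁ y₁ : V, HF F x₁ y₁ z' - HF F x y z' ≤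
    ((⟪p.1, x₁ - x⟫ + ⟪p.2, y₁ - y⟫ : ℝ) : EReal)}

/-- Argmaximum set `F_A(x,y,z*)`. -/
def FA {V : Type*} [NormedAddCommGroup V] [InnerProductSpace ℝ V]
    (F : V → V → Set V) (x y z' : V) : Set V :=
  {z ∈ F x y | ((⟪z, z'⟫ : ℝ) : EReal) = HF F x y z'}

/-- Subdifferential of an extended-real-valued function on a product of two spaces. -/
def subdiff2 {V W : Type*} [NormedAddCommGroup V] [InnerProductSpace ℝ V]
    [NormedAddCommGroup W] [InnerProductSpace ℝ W]
    (g : V × W → EReal) (u : V × W) : Set (V × W) :=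
  {p | ∀ v : V × W,
    ((⟪p.1, v.1 - u.1⟫ + ⟪p.2, v.2 - u.2⟫ : ℝ) : EReal) ≤ g v - g u}

/-- Subdifferential of a real-valued function on a product of two spaces. -/
def subdiffR2 {V W : Type*} [NormedAddCommGroup V] [InnerProductSpace ℝ V]
    [NormedAddCommGroup W] [InnerProductSpace ℝ W]
    (g : V × W → ℝ) (u : V × W) : Set (V × W) :=
  {p | ∀ v : V × W, ⟪p.1, v.1 - u.1⟫ + ⟪p.2, v.2 - u.2⟫ ≤ g v - g u}

/-- Dual cone to the cone of tangent directions of a convex set `Q` at `x₀`. -/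
def Kstar {V : Type*} [NormedAddCommGroup V] [InnerProductSpace ℝ V]
    (Q : Set V) (x₀ : V) : Set V :=
  {x' | ∀ x ∈ Q, 0 ≤ ⟪x', x - x₀⟫}

/-- Graph of a set-valued mapping. -/
def gph {V : Type*} (F : V → V → Set V) : Set (V × V × V) :=
  {p | p.2.2 ∈ F p.1 p.2.1}

/-- Convexity of an extended-real-valued function. -/
def ERealConvexOn {V : Type*} [AddCommGroup V] [Module ℝ V] (g : V → EReal) : Prop :=
  ∀ x y : V, ∀ a b : ℝ, 0 ≤ a → 0 ≤ b → a + b = 1 →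
    g (a • x + b • y) ≤ (a : EReal) * g x + (b : EReal) * g y

/-- `g` is absolutely continuous on `[0,1]` with derivative `g' ∈ L¹`. -/
def AC {n : ℕ} (g g' : ℝ → En n) : Prop :=
  MeasureTheory.IntegrableOn g' (Set.Icc (0 : ℝ) 1) ∧
    ∀ t ∈ Set.Icc (0 : ℝ) 1, g t = g 0 + ∫ s in (0 : ℝ)..t, g' s

/-- Feasible trajectory of the continuous problem `(P_C)`. -/
structure FeasTraj {n : ℕ} (F : ℝ → En n → En n → Set (En n)) (Q₀ Q₁ : Set (En n))
    (x x' x'' : ℝ → En n) : Prop where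
  int' : MeasureTheory.IntegrableOn x' (Set.Icc (0 : ℝ) 1)
  int'' : MeasureTheory.IntegrableOn x'' (Set.Icc (0 : ℝ) 1)
  hx : ∀ t ∈ Set.Icc (0 : ℝ) 1, x t = x 0 + ∫ s in (0 : ℝ)..t, x' s
  hx' : ∀ t ∈ Set.Icc (0 : ℝ) 1, x' t = x' 0 + ∫ s in (0 : ℝ)..t, x'' s
  incl : ∀ᵐ t ∂(MeasureTheory.volume.restrict (Set.Icc (0 : ℝ) 1)), x'' t ∈ F t (x t) (x' t)
  q0 : x 0 ∈ Q₀
  q1 : x' 0 ∈ Q₁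

/-! Along a feasible trajectory each `M_{F(·,t)}(x*_t - μ*_t, μ*_{t+1}, x*_{t+2})` is at most the
value of its objective at `(x_t, x_{t+1}, x_{t+2})`, and that value is the increment `P_{t+1} - P_t`
of `P_t = ⟨x_t, μ*_t - x*_t⟩ - ⟨x_{t+1}, x*_{t+1}⟩`. The sum therefore telescopes: the support
functions absorb `-P_0`, and what remains, `P_{N-1} - φ*`, is at most `φ` by Fenchel–Young. -/

section

variable {V W : Type*} [NormedAddCommGroup V] [InnerProductSpace ℝ V]
  [NormedAddCommGroup W] [InnerProductSpace ℝ W]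

theorem inner_le_suppFn {A : Set V} {a : V} (ha : a ∈ A) (u : V) :
    ((⟪a, u⟫ : ℝ) : EReal) ≤ suppFn A u :=
  le_iSup₂_of_le a ha le_rfl

theorem MF_le {F : V → V → Set V} {a b c : V} (hc : c ∈ F a b) (a' b' c' : V) :
    MF F a' b' c' ≤ ((⟪a, a'⟫ + ⟪b, b'⟫ - ⟪c, c'⟫ : ℝ) : EReal) :=
  iInf_le_of_le a <| iInf_le_of_le b <| iInf₂_le c hc

theorem neg_fconj2_add_inner_le (g : V × W → EReal) (p : V × W) (u : V) (w : W) :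
    -fconj2 g u w + ((⟪p.1, u⟫ + ⟪p.2, w⟫ : ℝ) : EReal) ≤ g p := by
  set c : ℝ := ⟪p.1, u⟫ + ⟪p.2, w⟫
  have fenchel_young : (c : EReal) - g p ≤ fconj2 g u w :=
    le_iSup (fun p : V × W ↦ ((⟪p.1, u⟫ + ⟪p.2, w⟫ : ℝ) : EReal) - g p) p
  have neg_fconj2_le : -fconj2 g u w ≤ g p - c := by
    apply EReal.neg_le_of_neg_le
    rwa [EReal.neg_sub (.inr (EReal.coe_ne_bot c)) (.inr (EReal.coe_ne_top c)), add_comm]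
  exact EReal.add_le_of_le_sub neg_fconj2_le

/-- The pairing `⟨x_t, μ*_t - x*_t⟩ + ⟨x_{t+1}, -x*_{t+1}⟩` of two consecutive states of a
trajectory with the dual variables: the potential `P_t` that makes the sum of the `M_F` telescope.
At the final pair of states it is the pairing in the conjugate `φ*`. -/
def adjointPairing (x x' μ' : ℕ → V) (t : ℕ) : ℝ :=
  ⟪x t, μ' t - x' t⟫ + ⟪x (t + 1), -x' (t + 1)⟫

theorem adjointPairing_succ_sub (x x' μ' : ℕ → V) (t : ℕ) :
    adjointPairing x x' μ' (t + 1) - adjointPairing x x' μ' t =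
      ⟪x t, x' t - μ' t⟫ + ⟪x (t + 1), μ' (t + 1)⟫ - ⟪x (t + 2), x' (t + 2)⟫ := by
  simp only [adjointPairing, inner_sub_right, inner_neg_right]
  ring

theorem sum_MF_le_adjointPairing_sub {m : ℕ} {F : ℕ → V → V → Set V} {x : ℕ → V}
    (hx : ∀ t < m, x (t + 2) ∈ F t (x t) (x (t + 1))) (x' μ' : ℕ → V) :
    ∑ t ∈ Finset.range m, MF (F t) (x' t - μ' t) (μ' (t + 1)) (x' (t + 2)) ≤
      ((adjointPairing x x' μ' m - adjointPairing x x' μ' 0 : ℝ) : EReal) := by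
  induction m with
  | zero => simp
  | succ m ih =>
    have hsum := ih fun t ht ↦ hx t (ht.trans m.lt_succ_self)
    have hstep := MF_le (hx m m.lt_succ_self) (x' m - μ' m) (μ' (m + 1)) (x' (m + 2))
    rw [← adjointPairing_succ_sub] at hstep
    rw [Finset.sum_range_succ,
      ← sub_add_sub_cancel' (adjointPairing x x' μ' m), EReal.coe_add]
    exact add_le_add hsum hstep

theorem stmt1_general {m : ℕ} (F : ℕ → V → V → Set V) (φ : V × V → EReal)
    (Q₀ Q₁ : Set V) (x : ℕ → V)
    (hfeas : ∀ t < m, x (t + 2) ∈ F t (x t) (x (t + 1)))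
    (hx0 : x 0 ∈ Q₀) (hx1 : x 1 ∈ Q₁) (x' μ' : ℕ → V) :
    -fconj2 φ (μ' m - x' m) (-x' (m + 1))
      + ∑ t ∈ Finset.range m, MF (F t) (x' t - μ' t) (μ' (t + 1)) (x' (t + 2))
      - suppFn Q₀ (x' 0 - μ' 0) - suppFn Q₁ (x' 1)
      ≤ φ (x m, x (m + 1)) := by
  set P := adjointPairing x x' μ'
  have initial_pairing : -P 0 = ⟪x 0, x' 0 - μ' 0⟫ + ⟪x 1, x' 1⟫ := by
    simp only [P, adjointPairing, inner_sub_right, inner_neg_right]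
    ring
  calc
    _ ≤ -fconj2 φ (μ' m - x' m) (-x' (m + 1)) + ((P m - P 0 : ℝ) : EReal)
          - ((⟪x 0, x' 0 - μ' 0⟫ : ℝ) : EReal) - ((⟪x 1, x' 1⟫ : ℝ) : EReal) :=
      EReal.sub_le_sub (EReal.sub_le_sub
        (add_le_add_right (sum_MF_le_adjointPairing_sub hfeas x' μ') _)
        (inner_le_suppFn hx0 _)) (inner_le_suppFn hx1 _)
    _ = -fconj2 φ (μ' m - x' m) (-x' (m + 1)) + (P m : EReal) := by
      simp only [sub_eq_add_neg, add_assoc, ← EReal.coe_neg, ← EReal.coe_add, initial_pairing]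
      congr 2
      ring
    _ ≤ φ (x m, x (m + 1)) := neg_fconj2_add_inner_le φ (x m, x (m + 1)) _ _

end

/-- weak duality for second order discrete inclusions (Theorem 3.2). -/
theorem stmt1 {n N : ℕ} (hN : 2 ≤ N)
    (F : ℕ → En n → En n → Set (En n)) (φ : En n × En n → EReal)
    (Q₀ Q₁ : Set (En n))
    (x : ℕ → En n)
    (hfeas : ∀ t, t ≤ N - 2 → x (t + 2) ∈ F t (x t) (x (t + 1)))
    (hx0 : x 0 ∈ Q₀) (hx1 : x 1 ∈ Q₁)
    (x' μ' : ℕ → En n) :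
    -(fconj2 φ (μ' (N - 1) - x' (N - 1)) (-(x' N)))
      + (∑ t ∈ Finset.range (N - 1), MF (F t) (x' t - μ' t) (μ' (t + 1)) (x' (t + 2)))
      - suppFn Q₀ (x' 0 - μ' 0) - suppFn Q₁ (x' 1)
      ≤ φ (x (N - 1), x N) := by
  obtain ⟨M, rfl⟩ := Nat.exists_eq_add_of_le' hN
  exact stmt1_general F φ Q₀ Q₁ x (fun t ht ↦ hfeas t (Nat.le_of_lt_succ ht)) hx0 hx1 x' μ'
end
end

section
/- (Euler–Lagrange conditions as a duality relation, Theorem 3.3, sufficiency direction.) Let N ≥ 2, let F(·,t) : ℝⁿ × ℝⁿ ⇉ ℝⁿ be convex set-valued mappings, Q₀, Q₁ ⊆ ℝⁿ nonempty convex sets, φ : ℝⁿ × ℝⁿ → ℝ ∪ {+∞} proper convex. Suppose {x̃_t}_{t=0}^N is feasible for (P_D) and vectors x*_t (t = 0,…,N), μ*_t (t = 0,…,N−1) satisfy: (i) (x*_t − μ*_t, μ*_{t+1}) ∈ F*(x*_{t+2}; (x̃_t, x̃_{t+1}, x̃_{t+2}), t) and x̃_{t+2} ∈ F_A(x̃_t,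 x̃_{t+1}, x*_{t+2}, t) for t = 0,…,N−2; (ii) μ*₀ − x*₀ ∈ K*_{Q₀}(x̃₀) and −x*₁ ∈ K*_{Q₁}(x̃₁); (iii) (μ*_{N−1} − x*_{N−1}, −x*_N) ∈ ∂φ(x̃_{N−1}, x̃_N). Then the dual objective attains the primal value: −φ*(μ*_{N−1} − x*_{N−1}, −x*_N) + Σ_{t=0}^{N−2} M_{F(·,t)}(x*_t − μ*_t, μ*_{t+1}, x*_{t+2}) − W_{Q₀}(x*₀ − μ*₀) − W_{Q₁}(x*₁) = φ(x̃_{N−1}, x̃_N). -/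
open scoped RealInnerProductSpace Pointwise
open MeasureTheory Matrix

noncomputable section

/-!
Each term of the dual objective is an optimal value that the optimality conditions evaluate
explicitly at the trajectory: Fenchel's equality gives `φ*`, the locally adjoint and argmaximum
conditions give `M_F`, and the transversality conditions give the two support functions. The
Euler–Lagrange sum then telescopes (discrete integration by parts), its initial boundary term
cancels the support functions and its final one cancels the pairing in `φ*`, leaving `φ`.
-/

theorem ereal_coe_sum {ι : Type*} (s : Finset ι) (f : ι → ℝ) :
    ((∑ i ∈ s, f i : ℝ) : EReal) = ∑ i ∈ s, (f i : EReal) :=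
  map_sum (⟨⟨Real.toEReal, EReal.coe_zero⟩, EReal.coe_add⟩ : ℝ →+ EReal) f s

section InnerProduct

variable {V W : Type*} [NormedAddCommGroup V] [InnerProductSpace ℝ V]
  [NormedAddCommGroup W] [InnerProductSpace ℝ W]

theorem suppFn_eq_inner_of_neg_mem_Kstar {A : Set V} {u x₀ : V} (hx₀ : x₀ ∈ A)
    (hu : -u ∈ Kstar A x₀) : suppFn A u = (⟪x₀, u⟫ : ℝ) := by
  refine le_antisymm (iSup₂_le fun x hx => EReal.coe_le_coe_iff.2 ?_)
    (le_iSup₂ (f := fun x (_ : x ∈ A) => ((⟪x, u⟫ : ℝ) : EReal)) x₀ hx₀)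
  have h : 0 ≤ ⟪-u, x - x₀⟫ := hu x hx
  rw [real_inner_comm, inner_neg_right, inner_sub_left] at h
  linarith

theorem coe_inner_le_HF {F : V → V → Set V} {x y z : V} (hz : z ∈ F x y) (z' : V) :
    ((⟪z, z'⟫ : ℝ) : EReal) ≤ HF F x y z' :=
  le_iSup₂ (f := fun z (_ : z ∈ F x y) => ((⟪z, z'⟫ : ℝ) : EReal)) z hz

theorem inner_sub_inner_le_of_mem_LAM_of_mem_FA {F : V → V → Set V} {x y z z' p q : V}
    (hpq : (p, q) ∈ LAM F z' x y) (hz : z ∈ FA F x y z') {x₁ y₁ z₁ : V} (hz₁ : z₁ ∈ F x₁ y₁) :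
    ⟪z₁, z'⟫ - ⟪z, z'⟫ ≤ ⟪p, x₁ - x⟫ + ⟪q, y₁ - y⟫ := by
  have hH : HF F x₁ y₁ z' - (⟪z, z'⟫ : ℝ) ≤ ((⟪p, x₁ - x⟫ + ⟪q, y₁ - y⟫ : ℝ) : EReal) :=
    hz.2 ▸ hpq x₁ y₁
  exact_mod_cast (EReal.sub_le_sub (coe_inner_le_HF hz₁ z') le_rfl).trans hH

theorem MF_eq_of_mem_LAM_of_mem_FA {F : V → V → Set V} {x y z z' p q : V}
    (hpq : (p, q) ∈ LAM F z' x y) (hz : z ∈ FA F x y z') :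
    MF F p q z' = (⟪x, p⟫ + ⟪y, q⟫ - ⟪z, z'⟫ : ℝ) := by
  refine le_antisymm (iInf_le_of_le x <| iInf_le_of_le y <| iInf₂_le z hz.1) ?_
  refine le_iInf fun x₁ => le_iInf fun y₁ => le_iInf₂ fun z₁ hz₁ => EReal.coe_le_coe_iff.2 ?_
  have h := inner_sub_inner_le_of_mem_LAM_of_mem_FA hpq hz hz₁
  simp only [real_inner_comm _ p, real_inner_comm _ q, inner_sub_left] at h
  linarith

theorem exists_eq_coe_of_mem_subdiff2 {g : V × W → EReal} {u p : V × W} (h : p ∈ subdiff2 g u) :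
    ∃ c : ℝ, g u = c := by
  have h₀ : 0 ≤ g u - g u := by simpa using h u
  -- `⊤ - ⊤` and `⊥ - ⊥` are both `⊥` in `EReal`.
  induction hu : g u with
  | bot => simp [hu] at h₀
  | top => simp [hu] at h₀
  | coe c => exact ⟨c, rfl⟩

theorem fconj2_eq_inner_sub_of_mem_subdiff2 {g : V × W → EReal} {u p : V × W}
    (h : p ∈ subdiff2 g u) :
    fconj2 g p.1 p.2 = (⟪u.1, p.1⟫ + ⟪u.2, p.2⟫ : ℝ) - g u := by
  refine le_antisymm (iSup_le fun v => ?_)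
    (le_iSup (fun v : V × W => ((⟪v.1, p.1⟫ + ⟪v.2, p.2⟫ : ℝ) : EReal) - g v) u)
  obtain ⟨c, hc⟩ := exists_eq_coe_of_mem_subdiff2 h
  have affine_le : ((⟪p.1, v.1 - u.1⟫ + ⟪p.2, v.2 - u.2⟫ + c : ℝ) : EReal) ≤ g v := by
    rw [EReal.coe_add, ← hc]
    exact EReal.add_le_of_le_sub (h v)
  refine (EReal.sub_le_sub le_rfl affine_le).trans_eq ?_
  rw [hc, ← EReal.coe_sub, ← EReal.coe_sub, EReal.coe_eq_coe_iff]
  simp only [real_inner_comm _ p.1, real_inner_comm _ p.2, inner_sub_left]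
  ring

/-- The boundary term at time `t` of the summation by parts that pairs a trajectory `x` of a
second-order inclusion with the adjoint variables `x'` and `μ'`. -/
def boundaryPairing (x x' μ' : ℕ → V) (t : ℕ) : ℝ :=
  ⟪x t, x' t - μ' t⟫ + ⟪x (t + 1), x' (t + 1)⟫

theorem sum_range_inner_eq_boundaryPairing_sub (x x' μ' : ℕ → V) (N : ℕ) :
    ∑ t ∈ Finset.range N,
        (⟪x t, x' t - μ' t⟫ + ⟪x (t + 1), μ' (t + 1)⟫ - ⟪x (t + 2), x' (t + 2)⟫)
      = boundaryPairing x x' μ' 0 - boundaryPairing x x' μ' N := by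
  rw [← Finset.sum_range_sub']
  refine Finset.sum_congr rfl fun t _ => ?_
  simp only [boundaryPairing, inner_sub_right]
  ring

theorem sum_range_MF_eq_boundaryPairing_sub {F : ℕ → V → V → Set V} {x x' μ' : ℕ → V} {N : ℕ}
    (hEL : ∀ t < N,
      (x' t - μ' t, μ' (t + 1)) ∈ LAM (F t) (x' (t + 2)) (x t) (x (t + 1)) ∧
      x (t + 2) ∈ FA (F t) (x t) (x (t + 1)) (x' (t + 2))) :
    ∑ t ∈ Finset.range N, MF (F t) (x' t - μ' t) (μ' (t + 1)) (x' (t + 2))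
      = (boundaryPairing x x' μ' 0 - boundaryPairing x x' μ' N : ℝ) := by
  rw [← sum_range_inner_eq_boundaryPairing_sub, ereal_coe_sum]
  refine Finset.sum_congr rfl fun t ht => ?_
  obtain ⟨hLAM, hFA⟩ := hEL t (Finset.mem_range.1 ht)
  exact MF_eq_of_mem_LAM_of_mem_FA hLAM hFA

theorem stmt3_general {N : ℕ} {F : ℕ → V → V → Set V} {Q₀ Q₁ : Set V} {φ : V × V → EReal}
    {x x' μ' : ℕ → V} (hx0 : x 0 ∈ Q₀) (hx1 : x 1 ∈ Q₁)
    (hEL : ∀ t < N,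
      (x' t - μ' t, μ' (t + 1)) ∈ LAM (F t) (x' (t + 2)) (x t) (x (t + 1)) ∧
      x (t + 2) ∈ FA (F t) (x t) (x (t + 1)) (x' (t + 2)))
    (htr0 : μ' 0 - x' 0 ∈ Kstar Q₀ (x 0)) (htr1 : -(x' 1) ∈ Kstar Q₁ (x 1))
    (htrN : (μ' N - x' N, -(x' (N + 1))) ∈ subdiff2 φ (x N, x (N + 1))) :
    -(fconj2 φ (μ' N - x' N) (-(x' (N + 1))))
      + (∑ t ∈ Finset.range N, MF (F t) (x' t - μ' t) (μ' (t + 1)) (x' (t + 2)))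
      - suppFn Q₀ (x' 0 - μ' 0) - suppFn Q₁ (x' 1)
      = φ (x N, x (N + 1)) := by
  obtain ⟨c, hc⟩ := exists_eq_coe_of_mem_subdiff2 htrN
  have hconj : fconj2 φ (μ' N - x' N) (-(x' (N + 1)))
      = (-boundaryPairing x x' μ' N - c : ℝ) := by
    rw [fconj2_eq_inner_sub_of_mem_subdiff2 htrN, hc, ← EReal.coe_sub, EReal.coe_eq_coe_iff]
    simp only [boundaryPairing, inner_sub_right, inner_neg_right]
    ring
  rw [hconj, sum_range_MF_eq_boundaryPairing_sub hEL, hc,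
    suppFn_eq_inner_of_neg_mem_Kstar hx0 (by rwa [neg_sub]),
    suppFn_eq_inner_of_neg_mem_Kstar hx1 htr1]
  norm_cast
  simp only [boundaryPairing, zero_add]
  ring

end InnerProduct

/-- Euler–Lagrange conditions as a duality relation
(Theorem 3.3, sufficiency direction). -/
theorem stmt3 {n N : ℕ} (hN : 2 ≤ N)
    (F : ℕ → En n → En n → Set (En n))
    (hFconv : ∀ t, Convex ℝ (gph (F t)))
    (Q₀ Q₁ : Set (En n)) (hQ₀c : Convex ℝ Q₀) (hQ₁c : Convex ℝ Q₁)
    (hQ₀ne : Q₀.Nonempty) (hQ₁ne : Q₁.Nonempty)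
    (φ : En n × En n → EReal) (hφconv : ERealConvexOn φ)
    (hφproper : (∀ p, φ p ≠ ⊥) ∧ ∃ p, φ p ≠ ⊤)
    (xt : ℕ → En n)
    (hfeas : ∀ t, t ≤ N - 2 → xt (t + 2) ∈ F t (xt t) (xt (t + 1)))
    (hxt0 : xt 0 ∈ Q₀) (hxt1 : xt 1 ∈ Q₁)
    (x' μ' : ℕ → En n)
    (hEL : ∀ t, t ≤ N - 2 →
      (x' t - μ' t, μ' (t + 1)) ∈ LAM (F t) (x' (t + 2)) (xt t) (xt (t + 1)) ∧
      xt (t + 2) ∈ FA (F t) (xt t) (xt (t + 1)) (x' (t + 2)))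
    (htr0 : μ' 0 - x' 0 ∈ Kstar Q₀ (xt 0)) (htr1 : -(x' 1) ∈ Kstar Q₁ (xt 1))
    (htrN : (μ' (N - 1) - x' (N - 1), -(x' N)) ∈ subdiff2 φ (xt (N - 1), xt N)) :
    -(fconj2 φ (μ' (N - 1) - x' (N - 1)) (-(x' N)))
      + (∑ t ∈ Finset.range (N - 1), MF (F t) (x' t - μ' t) (μ' (t + 1)) (x' (t + 2)))
      - suppFn Q₀ (x' 0 - μ' 0) - suppFn Q₁ (x' 1)
      = φ (xt (N - 1), xt N) := by
  obtain ⟨k, rfl⟩ := Nat.exists_eq_add_of_le' hN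
  exact stmt3_general hxt0 hxt1 (fun t ht => hEL t (Nat.le_of_lt_succ ht)) htr0 htr1 htrN
end
end

section
/- (Proposition 4.1.) Let δ > 0, let F : ℝⁿ × ℝⁿ ⇉ ℝⁿ be a convex set-valued mapping, and define G : ℝⁿ × ℝⁿ ⇉ ℝⁿ by G(x,y) = {2y − x + δ²v : v ∈ F(x, (y−x)/δ)}. Then for all x*, y*, z* ∈ ℝⁿ, M_G(x*, y*, z*) = δ² · M_F((x* + y* − z*)/δ², (y* − 2z*)/δ, z*), as an equality in ℝ ∪ {±∞}. -/
open scoped RealInnerProductSpace Pointwise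
open MeasureTheory Matrix

noncomputable section

/-! The graph of `G` is the image of the graph of `F` under the linear bijection
`T (x, w, v) = (x, x + δw, x + 2δw + δ²v)`. Pulling the functional `(x', y', -z')` back along `T`,
that is, applying the transpose of `T`, gives `(x' + y' - z', δ(y' - 2z'), -δ²z')`, so `M_G` at the
former is `M_F` at the latter; positive homogeneity of `M_F` then extracts the factor `δ²`. -/

theorem gc_ereal_div_mul {c : EReal} (hc : 0 < c) (hc_top : c ≠ ⊤) :
    GaloisConnection (· / c) (c * ·) :=
  fun _ _ => EReal.div_le_iff_le_mul hc hc_top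

section GraphFunctional

variable {V W : Type*} [NormedAddCommGroup V] [InnerProductSpace ℝ V]
  [NormedAddCommGroup W] [InnerProductSpace ℝ W]

/-- The value `⟨x, x'⟩ + ⟨y, y'⟩ - ⟨z, z'⟩` at `p = (x, y, z)` of the functional that `MF` minimizes
over the graph. -/
def graphPairing (p : V × V × V) (x' y' z' : V) : ℝ :=
  ⟪p.1, x'⟫ + ⟪p.2.1, y'⟫ - ⟪p.2.2, z'⟫

theorem graphPairing_smul_right (c : ℝ) (p : V × V × V) (x' y' z' : V) :
    graphPairing p (c • x') (c • y') (c • z') = c * graphPairing p x' y' z' := by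
  simp only [graphPairing, real_inner_smul_right]
  ring

theorem MF_eq_iInf_gph (F : V → V → Set V) (x' y' z' : V) :
    MF F x' y' z' = ⨅ p ∈ gph F, (graphPairing p x' y' z' : EReal) := by
  simp only [MF, gph, graphPairing, iInf_prod, Set.mem_ofPred_eq]

theorem MF_smul {c : ℝ} (hc : 0 < c) (F : V → V → Set V) (x' y' z' : V) :
    MF F (c • x') (c • y') (c • z') = (c : EReal) * MF F x' y' z' := by
  have gc := gc_ereal_div_mul (EReal.coe_pos.2 hc) (EReal.coe_ne_top c)
  simp only [MF_eq_iInf_gph, graphPairing_smul_right, EReal.coe_mul, gc.u_iInf₂]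

theorem MF_eq_of_gph_eq_image {F : V → V → Set V} {G : W → W → Set W}
    {T : V × V × V → W × W × W} (hgph : gph G = T '' gph F) {x' y' z' : W} {u' v' w' : V}
    (hpair : ∀ p ∈ gph F, graphPairing (T p) x' y' z' = graphPairing p u' v' w') :
    MF G x' y' z' = MF F u' v' w' := by
  rw [MF_eq_iInf_gph, MF_eq_iInf_gph, hgph, iInf_image]
  exact biInf_congr fun p hp => congrArg Real.toEReal (hpair p hp)

end GraphFunctional

section Discretization

variable {V : Type*} [NormedAddCommGroup V] [InnerProductSpace ℝ V]

/-- The discrete-time mapping with step `δ` of the second-order inclusion `x'' ∈ F(x, x')`: for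
`δ ≠ 0`, it relates three consecutive grid values `x`, `y`, `z` when the second difference quotient
`(z - 2y + x) / δ²` lies in `F` at `x` and the first difference quotient `(y - x) / δ`. -/
def discretization (δ : ℝ) (F : V → V → Set V) (x y : V) : Set V :=
  {z | ∃ v ∈ F x (δ⁻¹ • (y - x)), z = (2 : ℝ) • y - x + (δ ^ 2) • v}

/-- The three consecutive grid values with step `δ` that start at `x` and have first and second
difference quotients `w` and `v`, as a function of `(x, w, v)`. -/
def gridValues (δ : ℝ) (p : V × V × V) : V × V × V :=
  (p.1, p.1 + δ • p.2.1, p.1 + (2 * δ) • p.2.1 + (δ ^ 2) • p.2.2)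

theorem gph_discretization {δ : ℝ} (hδ : δ ≠ 0) (F : V → V → Set V) :
    gph (discretization δ F) = gridValues δ '' gph F := by
  ext ⟨x, y, z⟩
  constructor
  · rintro ⟨v, hv, hz⟩
    obtain rfl : z = (2 : ℝ) • y - x + (δ ^ 2) • v := hz
    have hy : x + δ • δ⁻¹ • (y - x) = y := by rw [smul_inv_smul₀ hδ, add_sub_cancel]
    have hgrid : x + (2 * δ) • δ⁻¹ • (y - x) + (δ ^ 2) • v = (2 : ℝ) • y - x + (δ ^ 2) • v := by
      rw [mul_smul, smul_inv_smul₀ hδ]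
      module
    exact ⟨(x, δ⁻¹ • (y - x), v), hv, Prod.ext rfl (Prod.ext hy hgrid)⟩
  · rintro ⟨⟨x, w, v⟩, hv : v ∈ F x w, ⟨⟩⟩
    have hw : δ⁻¹ • (x + δ • w - x) = w := by rw [add_sub_cancel_left, inv_smul_smul₀ hδ]
    refine ⟨v, hw.symm ▸ hv, ?_⟩
    dsimp only
    module

theorem graphPairing_gridValues (δ : ℝ) (p : V × V × V) (x' y' z' : V) :
    graphPairing (gridValues δ p) x' y' z' =
      graphPairing p (x' + y' - z') (δ • (y' - (2 : ℝ) • z')) ((δ ^ 2) • z') := by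
  simp only [graphPairing, gridValues, inner_add_left, inner_add_right, inner_sub_right,
    real_inner_smul_left, real_inner_smul_right]
  ring

theorem MF_discretization {δ : ℝ} (hδ : δ ≠ 0) (F : V → V → Set V) (x' y' z' : V) :
    MF (discretization δ F) x' y' z' =
      MF F (x' + y' - z') (δ • (y' - (2 : ℝ) • z')) ((δ ^ 2) • z') :=
  MF_eq_of_gph_eq_image (gph_discretization hδ F) fun p _ => graphPairing_gridValues δ p x' y' z'

theorem stmt4_general {δ : ℝ} (hδ : δ ≠ 0) (F : V → V → Set V) (x' y' z' : V) :
    MF (discretization δ F) x' y' z' = ((δ ^ 2 : ℝ) : EReal) *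
      MF F ((δ ^ 2)⁻¹ • (x' + y' - z')) (δ⁻¹ • (y' - (2 : ℝ) • z')) z' := by
  have hδ_sq : 0 < δ ^ 2 := sq_pos_of_ne_zero hδ
  have hδ_sq_inv : δ ^ 2 * δ⁻¹ = δ := by field_simp
  rw [MF_discretization hδ, ← MF_smul hδ_sq, smul_inv_smul₀ hδ_sq.ne', smul_smul, hδ_sq_inv]

end Discretization

/-- Proposition 4.1. -/
theorem stmt4 {n : ℕ} (δ : ℝ) (hδ : 0 < δ)
    (F G : En n → En n → Set (En n)) (hFconv : Convex ℝ (gph F))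
    (hG : ∀ x y : En n,
      G x y = {z | ∃ v ∈ F x (δ⁻¹ • (y - x)), z = (2 : ℝ) • y - x + (δ ^ 2) • v})
    (x' y' z' : En n) :
    MF G x' y' z' = ((δ ^ 2 : ℝ) : EReal) *
      MF F ((δ ^ 2)⁻¹ • (x' + y' - z')) (δ⁻¹ • (y' - (2 : ℝ) • z')) z' := by
  obtain rfl : G = discretization δ F := funext₂ hG
  exact stmt4_general hδ.ne' F x' y' z'
end
end

section
/- (Theorem 5.1, sufficient optimality conditions for second order differential inclusions.) Let F(·,t) : ℝⁿ × ℝⁿ ⇉ ℝⁿ be a convex set-valued mapping for each t ∈ [0,1], Q₀, Q₁ ⊆ ℝⁿ nonempty convex sets, and φ : ℝⁿ × ℝⁿ → ℝ convex and continuous. Let x̃ be a feasible trajectory of (P_C), and suppose there exist functions x*, v* : [0,1] → ℝⁿ with x*, x*' absolutely continuous, x*'' ∈ L¹, and v* absolutely continuous with v*' ∈ L¹, such that for a.e. t ∈ [0,1]: (a) (x*''(t) + v*'(t), v*(t)) ∈ F*(x*(t); (x̃(t), x̃'(t), x̃''(t)), t); (b) x̃''(t) ∈ F_A(x̃(t),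 x̃'(t), x*(t), t); and the transversality conditions (c) v*(0) + x*'(0) ∈ K*_{Q₀}(x̃(0)) and −x*(0) ∈ K*_{Q₁}(x̃'(0)); (d) (v*(1) + x*'(1), −x*(1)) ∈ ∂φ(x̃(1), x̃'(1)). Then x̃ is optimal: φ(x(1), x'(1)) ≥ φ(x̃(1), x̃'(1)) for every feasible trajectory x of (P_C). -/
open scoped RealInnerProductSpace Pointwise
open MeasureTheory Matrix

noncomputable section

/-!
Pair the difference of a competitor `x` and `x̃` with the adjoint variables:
`h t = ⟪v* t + x*' t, x t - x̃ t⟫ - ⟪x* t, x' t - x̃' t⟫`. By the product rule for absolutely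
continuous functions, `h` is an indefinite integral of
`⟪x*'' + v*', x - x̃⟫ + ⟪v*, x' - x̃'⟫ - ⟪x*, x'' - x̃''⟫`, the terms in `⟪x*', x' - x̃'⟫`
cancelling. This is nonnegative almost everywhere: the first two terms bound the increment of the
Hamiltonian, whose value at `x̃` is attained by `x̃''`. Hence `h` increases from `0 ≤ h 0`
(dual cone conditions) to `h 1 ≤ φ (x 1, x' 1) - φ (x̃ 1, x̃' 1)` (subgradient inequality).
-/

section AbsolutelyContinuous

variable {X Y Z E F G : Type*} [PseudoMetricSpace X] [PseudoMetricSpace Y] [PseudoMetricSpace Z]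
  [NormedAddCommGroup E] [NormedSpace ℝ E] [NormedAddCommGroup F] [NormedSpace ℝ F]
  [NormedAddCommGroup G] [NormedSpace ℝ G] {a b : ℝ}

lemma absolutelyContinuousOnInterval_of_dist_le_add {f : ℝ → X} {g : ℝ → Y} {h : ℝ → Z} (C D : ℝ)
    (hg : AbsolutelyContinuousOnInterval g a b) (hh : AbsolutelyContinuousOnInterval h a b)
    (hfgh : ∀ s ∈ Set.uIcc a b, ∀ t ∈ Set.uIcc a b,
      dist (f s) (f t) ≤ C * dist (g s) (g t) + D * dist (h s) (h t)) :
    AbsolutelyContinuousOnInterval f a b := by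
  have hlim := (Filter.Tendsto.const_mul C hg).add (Filter.Tendsto.const_mul D hh)
  rw [mul_zero, mul_zero, add_zero] at hlim
  refine squeeze_zero' (.of_forall fun _ ↦ Finset.sum_nonneg fun _ _ ↦ dist_nonneg) ?_ hlim
  rw [Filter.eventually_inf_principal]
  refine .of_forall fun I hI ↦ ?_
  rw [Finset.mul_sum, Finset.mul_sum, ← Finset.sum_add_distrib]
  exact Finset.sum_le_sum fun i hi ↦ hfgh _ (hI.1 i hi).1 _ (hI.1 i hi).2

lemma absolutelyContinuousOnInterval_intervalIntegral {f : ℝ → E}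
    (hf : IntervalIntegrable f volume a b) :
    AbsolutelyContinuousOnInterval (fun t ↦ ∫ s in a..t, f s) a b := by
  have hnorm := hf.norm.absolutelyContinuousOnInterval_intervalIntegral Set.left_mem_uIcc
  refine absolutelyContinuousOnInterval_of_dist_le_add 1 0 hnorm hnorm fun s hs t ht ↦ ?_
  have hfs := hf.mono_set (Set.uIcc_subset_uIcc_left hs)
  have hft := hf.mono_set (Set.uIcc_subset_uIcc_left ht)
  rw [one_mul, zero_mul, add_zero, dist_eq_norm, dist_eq_norm, Real.norm_eq_abs,
    intervalIntegral.integral_interval_sub_left hfs hft,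
    intervalIntegral.integral_interval_sub_left hfs.norm hft.norm]
  exact intervalIntegral.norm_integral_le_abs_integral_norm

lemma absolutelyContinuousOnInterval_bilinear (B : E →L[ℝ] F →L[ℝ] G) {f : ℝ → E} {g : ℝ → F}
    (hf : AbsolutelyContinuousOnInterval f a b) (hg : AbsolutelyContinuousOnInterval g a b) :
    AbsolutelyContinuousOnInterval (fun t ↦ B (f t) (g t)) a b := by
  obtain ⟨C, hC⟩ := hf.exists_bound
  obtain ⟨D, hD⟩ := hg.exists_bound
  refine absolutelyContinuousOnInterval_of_dist_le_add (‖B‖ * D) (‖B‖ * C) hf hg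
    fun s hs t ht ↦ ?_
  calc dist (B (f s) (g s)) (B (f t) (g t))
      = ‖B (f s - f t) (g s) + B (f t) (g s - g t)‖ := by
        rw [dist_eq_norm, map_sub, map_sub, _root_.sub_apply, sub_add_sub_cancel]
    _ ≤ ‖B‖ * ‖f s - f t‖ * ‖g s‖ + ‖B‖ * ‖f t‖ * ‖g s - g t‖ :=
        norm_add_le_of_le (B.le_opNorm₂ _ _) (B.le_opNorm₂ _ _)
    _ ≤ ‖B‖ * ‖f s - f t‖ * D + ‖B‖ * C * ‖g s - g t‖ := by
        gcongr
        exacts [hD s hs, hC t ht]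
    _ = ‖B‖ * D * dist (f s) (f t) + ‖B‖ * C * dist (g s) (g t) := by
        rw [dist_eq_norm, dist_eq_norm, mul_right_comm]

lemma intervalIntegrable_bilinear_of_continuousOn (B : E →L[ℝ] F →L[ℝ] G) {f : ℝ → E} {g : ℝ → F}
    (hf : ContinuousOn f (Set.uIcc a b)) (hg : IntervalIntegrable g volume a b) :
    IntervalIntegrable (fun t ↦ B (f t) (g t)) volume a b := by
  obtain ⟨C, hC⟩ := isCompact_uIcc.exists_bound_of_continuousOn hf
  rw [intervalIntegrable_iff] at hg ⊢
  refine B.integrable_of_bilin_of_bdd_left C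
    ((hf.mono Set.uIoc_subset_uIcc).aestronglyMeasurable measurableSet_uIoc) ?_ hg
  exact (ae_restrict_mem measurableSet_uIoc).mono fun t ht ↦ hC t (Set.uIoc_subset_uIcc ht)

end AbsolutelyContinuous

/-- `f` is absolutely continuous on the interval with endpoints `a` and `b`, with integrable
derivative `f'`. As in `AC`, this is encoded by `f` being an indefinite integral of `f'`. -/
structure IsPrimitiveOn {E : Type*} [NormedAddCommGroup E] [NormedSpace ℝ E] (f f' : ℝ → E)
    (a b : ℝ) : Prop where
  intervalIntegrable : IntervalIntegrable f' volume a b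
  eq_add_integral : ∀ t ∈ Set.uIcc a b, f t = f a + ∫ s in a..t, f' s

namespace IsPrimitiveOn

variable {E F G : Type*} [NormedAddCommGroup E] [NormedSpace ℝ E] [NormedAddCommGroup F]
  [NormedSpace ℝ F] [NormedAddCommGroup G] [NormedSpace ℝ G] {a b : ℝ} {f f' g g' : ℝ → E}

lemma intervalIntegrable_left (hf : IsPrimitiveOn f f' a b) {t : ℝ} (ht : t ∈ Set.uIcc a b) :
    IntervalIntegrable f' volume a t :=
  hf.intervalIntegrable.mono_set (Set.uIcc_subset_uIcc_left ht)

lemma add (hf : IsPrimitiveOn f f' a b) (hg : IsPrimitiveOn g g' a b) :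
    IsPrimitiveOn (fun t ↦ f t + g t) (fun t ↦ f' t + g' t) a b where
  intervalIntegrable := hf.intervalIntegrable.add hg.intervalIntegrable
  eq_add_integral t ht := by
    rw [intervalIntegral.integral_add (hf.intervalIntegrable_left ht)
      (hg.intervalIntegrable_left ht), add_add_add_comm, ← hf.eq_add_integral t ht,
      ← hg.eq_add_integral t ht]

lemma sub (hf : IsPrimitiveOn f f' a b) (hg : IsPrimitiveOn g g' a b) :
    IsPrimitiveOn (fun t ↦ f t - g t) (fun t ↦ f' t - g' t) a b where
  intervalIntegrable := hf.intervalIntegrable.sub hg.intervalIntegrable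
  eq_add_integral t ht := by
    rw [intervalIntegral.integral_sub (hf.intervalIntegrable_left ht)
      (hg.intervalIntegrable_left ht), sub_add_sub_comm, ← hf.eq_add_integral t ht,
      ← hg.eq_add_integral t ht]

lemma absolutelyContinuousOnInterval (hf : IsPrimitiveOn f f' a b) :
    AbsolutelyContinuousOnInterval f a b := by
  have hint := absolutelyContinuousOnInterval_intervalIntegral hf.intervalIntegrable
  refine absolutelyContinuousOnInterval_of_dist_le_add 1 0 hint hint fun s hs t ht ↦ ?_
  rw [hf.eq_add_integral s hs, hf.eq_add_integral t ht, dist_add_left, one_mul, zero_mul, add_zero]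

lemma ae_hasDerivAt [CompleteSpace E] (hf : IsPrimitiveOn f f' a b) :
    ∀ᵐ t, t ∈ Set.uIcc a b → HasDerivAt f (f' t) t := by
  have hne (c : ℝ) : ∀ᵐ t : ℝ, t ≠ c := by simp [ae_iff, measure_singleton]
  filter_upwards [hf.intervalIntegrable.ae_hasDerivAt_integral, hne (min a b), hne (max a b)]
    with t hderiv hmin hmax ht
  have hnhds : Set.uIcc a b ∈ nhds t :=
    Icc_mem_nhds (lt_of_le_of_ne ht.1 hmin.symm) (lt_of_le_of_ne ht.2 hmax)
  exact ((hderiv ht a Set.left_mem_uIcc).const_add (f a)).congr_of_eventuallyEq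
    (Filter.eventually_of_mem hnhds hf.eq_add_integral)

lemma of_ae_hasDerivAt [CompleteSpace E] (hf : AbsolutelyContinuousOnInterval f a b)
    (hf' : IntervalIntegrable f' volume a b)
    (hderiv : ∀ᵐ t, t ∈ Set.uIcc a b → HasDerivAt f (f' t) t) : IsPrimitiveOn f f' a b := by
  refine ⟨hf', fun t ht ↦ ?_⟩
  have hzero : ∀ᵐ t, t ∈ Set.uIcc a b → HasDerivAt (f - fun t ↦ ∫ s in a..t, f' s) 0 t := by
    filter_upwards [hderiv, hf'.ae_hasDerivAt_integral] with t hft hint ht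
    simpa only [sub_self] using (hft ht).sub (hint ht a Set.left_mem_uIcc)
  obtain ⟨c, hc⟩ := (hf.sub
    (absolutelyContinuousOnInterval_intervalIntegral hf')).const_of_ae_hasDerivAt_zero hzero
  have hca : f a = c := by simpa using hc a Set.left_mem_uIcc
  exact sub_eq_iff_eq_add.mp ((hc t ht).trans hca.symm)

lemma bilinear [CompleteSpace E] [CompleteSpace F] [CompleteSpace G] (B : E →L[ℝ] F →L[ℝ] G)
    {g g' : ℝ → F} (hf : IsPrimitiveOn f f' a b) (hg : IsPrimitiveOn g g' a b) :
    IsPrimitiveOn (fun t ↦ B (f t) (g t)) (fun t ↦ B (f t) (g' t) + B (f' t) (g t)) a b := by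
  have hfAC := hf.absolutelyContinuousOnInterval
  have hgAC := hg.absolutelyContinuousOnInterval
  refine of_ae_hasDerivAt (absolutelyContinuousOnInterval_bilinear B hfAC hgAC)
    ((intervalIntegrable_bilinear_of_continuousOn B hfAC.continuousOn hg.intervalIntegrable).add
      (intervalIntegrable_bilinear_of_continuousOn B.flip hgAC.continuousOn
        hf.intervalIntegrable)) ?_
  filter_upwards [hf.ae_hasDerivAt, hg.ae_hasDerivAt] with t hft hgt ht
  exact B.hasDerivAt_of_bilinear (fun _ ↦ hft ht) (fun _ ↦ hgt ht)

lemma inner {V : Type*} [NormedAddCommGroup V] [InnerProductSpace ℝ V] [CompleteSpace V]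
    {f f' g g' : ℝ → V} (hf : IsPrimitiveOn f f' a b) (hg : IsPrimitiveOn g g' a b) :
    IsPrimitiveOn (fun t ↦ ⟪f t, g t⟫) (fun t ↦ ⟪f t, g' t⟫ + ⟪f' t, g t⟫) a b :=
  hf.bilinear (innerSL ℝ) hg

lemma le_of_ae_nonneg {f f' : ℝ → ℝ} (hf : IsPrimitiveOn f f' a b) (hab : a ≤ b)
    (hf' : ∀ᵐ t ∂(volume.restrict (Set.Icc a b)), 0 ≤ f' t) : f a ≤ f b := by
  rw [hf.eq_add_integral b Set.right_mem_uIcc]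
  exact le_add_of_nonneg_right (intervalIntegral.integral_nonneg_of_ae_restrict hab hf')

end IsPrimitiveOn

lemma AC.isPrimitiveOn {n : ℕ} {f f' : ℝ → En n} (hf : AC f f') : IsPrimitiveOn f f' 0 1 where
  intervalIntegrable := (intervalIntegrable_iff_integrableOn_Icc_of_le zero_le_one).2 hf.1
  eq_add_integral t ht := hf.2 t (Set.uIcc_of_le (zero_le_one' ℝ) ▸ ht)

namespace FeasTraj

variable {n : ℕ} {F : ℝ → En n → En n → Set (En n)} {Q₀ Q₁ : Set (En n)} {x x' x'' : ℝ → En n}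

lemma isPrimitiveOn (hx : FeasTraj F Q₀ Q₁ x x' x'') : IsPrimitiveOn x x' 0 1 :=
  AC.isPrimitiveOn ⟨hx.int', hx.hx⟩

lemma isPrimitiveOn_deriv (hx : FeasTraj F Q₀ Q₁ x x' x'') : IsPrimitiveOn x' x'' 0 1 :=
  AC.isPrimitiveOn ⟨hx.int'', hx.hx'⟩

end FeasTraj

section Sufficiency

variable {V : Type*} [NormedAddCommGroup V] [InnerProductSpace ℝ V]

lemma inner_sub_le_of_mem_LAM_of_mem_FA {F : V → V → Set V} {x y z x₁ y₁ z₁ z' p q : V}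
    (hpq : (p, q) ∈ LAM F z' x y) (hz : z ∈ FA F x y z') (hz₁ : z₁ ∈ F x₁ y₁) :
    ⟪z', z₁ - z⟫ ≤ ⟪p, x₁ - x⟫ + ⟪q, y₁ - y⟫ := by
  have hHF₁ : ((⟪z₁, z'⟫ : ℝ) : EReal) ≤ HF F x₁ y₁ z' := le_iSup₂_of_le z₁ hz₁ le_rfl
  have hHF : HF F x y z' = ((⟪z, z'⟫ : ℝ) : EReal) := hz.2.symm
  have hdiff := (EReal.sub_le_sub hHF₁ hHF.le).trans (hpq x₁ y₁)
  rw [← EReal.coe_sub, EReal.coe_le_coe_iff] at hdiff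
  rwa [real_inner_comm, inner_sub_left]

theorem stmt14_general [CompleteSpace V] {a b : ℝ} (hab : a ≤ b) {F : ℝ → V → V → Set V}
    {Q₀ Q₁ : Set V} {φ : V × V → ℝ} {xt xt' xt'' xs xs' xs'' vs vs' : ℝ → V}
    (hxt : IsPrimitiveOn xt xt' a b) (hxt' : IsPrimitiveOn xt' xt'' a b)
    (hxs : IsPrimitiveOn xs xs' a b) (hxs' : IsPrimitiveOn xs' xs'' a b)
    (hvs : IsPrimitiveOn vs vs' a b)
    (hLAM : ∀ᵐ t ∂(volume.restrict (Set.Icc a b)),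
      (xs'' t + vs' t, vs t) ∈ LAM (F t) (xs t) (xt t) (xt' t))
    (hFA : ∀ᵐ t ∂(volume.restrict (Set.Icc a b)), xt'' t ∈ FA (F t) (xt t) (xt' t) (xs t))
    (hQ₀ : vs a + xs' a ∈ Kstar Q₀ (xt a)) (hQ₁ : -(xs a) ∈ Kstar Q₁ (xt' a))
    (hφ : (vs b + xs' b, -(xs b)) ∈ subdiffR2 φ (xt b, xt' b))
    {x x' x'' : ℝ → V} (hx : IsPrimitiveOn x x' a b) (hx' : IsPrimitiveOn x' x'' a b)
    (hF : ∀ᵐ t ∂(volume.restrict (Set.Icc a b)), x'' t ∈ F t (x t) (x' t))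
    (hxa : x a ∈ Q₀) (hxa' : x' a ∈ Q₁) :
    φ (xt b, xt' b) ≤ φ (x b, x' b) := by
  have hpairing := ((hvs.add hxs').inner (hx.sub hxt)).sub (hxs.inner (hx'.sub hxt'))
  have hmono := hpairing.le_of_ae_nonneg hab <| by
    filter_upwards [hLAM, hFA, hF] with t hLAM hFA hF
    have hadj := inner_sub_le_of_mem_LAM_of_mem_FA hLAM hFA hF
    rw [inner_add_left] at hadj ⊢
    rw [inner_add_left]
    linarith
  have hstart := add_nonneg (hQ₀ (x a) hxa) (hQ₁ (x' a) hxa')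
  have hend := hφ (x b, x' b)
  rw [inner_neg_left] at hstart hend
  linarith

end Sufficiency

/-- Theorem 5.1, sufficient optimality conditions for second order
differential inclusions.  Here `xs, xs', xs''` stand for `x*, x*', x*''` and
`vs, vs'` for `v*, v*'`. -/
theorem stmt14 {n : ℕ}
    (F : ℝ → En n → En n → Set (En n))
    (hFconv : ∀ t ∈ Set.Icc (0 : ℝ) 1, Convex ℝ (gph (F t)))
    (Q₀ Q₁ : Set (En n)) (hQ₀c : Convex ℝ Q₀) (hQ₁c : Convex ℝ Q₁)
    (hQ₀ne : Q₀.Nonempty) (hQ₁ne : Q₁.Nonempty)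
    (φ : En n × En n → ℝ) (hφconv : ConvexOn ℝ Set.univ φ) (hφcont : Continuous φ)
    (xt xt' xt'' : ℝ → En n) (hxt : FeasTraj F Q₀ Q₁ xt xt' xt'')
    (xs xs' xs'' vs vs' : ℝ → En n)
    (hxsAC : AC xs xs') (hxs'AC : AC xs' xs'') (hvsAC : AC vs vs')
    (ha : ∀ᵐ t ∂(volume.restrict (Set.Icc (0 : ℝ) 1)),
      (xs'' t + vs' t, vs t) ∈ LAM (F t) (xs t) (xt t) (xt' t))
    (hb : ∀ᵐ t ∂(volume.restrict (Set.Icc (0 : ℝ) 1)),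
      xt'' t ∈ FA (F t) (xt t) (xt' t) (xs t))
    (hc0 : vs 0 + xs' 0 ∈ Kstar Q₀ (xt 0))
    (hc1 : -(xs 0) ∈ Kstar Q₁ (xt' 0))
    (hd : (vs 1 + xs' 1, -(xs 1)) ∈ subdiffR2 φ (xt 1, xt' 1)) :
    ∀ x x' x'' : ℝ → En n, FeasTraj F Q₀ Q₁ x x' x'' →
      φ (xt 1, xt' 1) ≤ φ (x 1, x' 1) :=
  fun _ _ _ hx ↦ stmt14_general zero_le_one hxt.isPrimitiveOn hxt.isPrimitiveOn_deriv
    hxsAC.isPrimitiveOn hxs'AC.isPrimitiveOn hvsAC.isPrimitiveOn ha hb hc0 hc1 hd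
    hx.isPrimitiveOn hx.isPrimitiveOn_deriv hx.incl hx.q0 hx.q1
end
end
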